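/- arXiv:2006.02325 — 2 statements merged into one kernel-verified Lean document; each statement's English description precedes it below -/
import Mathlib

section
/- Let n ≥ 2 and 2 ≤ k ≤ n. Let A and B be real symmetric n×n matrices such that A is positive semidefinite, B ∈ Γ_{k-1}, and A + B ∈ Γ_{k-1}. Then σ_k(A+B)/σ_{k-1}(A+B) ≥ σ_k(B)/σ_{k-1}(B). -/
/-!
The eigenvalue polynomials are controlled through rank-one updates.  If `M` is symmetric with
eigenvalues `μ` and `w` is the coordinate vector of `v` in an orthonormal eigenbasis of `M`, the
matrix determinant lemma gives (`esymm_rank_one`)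
`σ_{j+1}(M + v vᵀ) = σ_{j+1}(μ) + ∑ i, w_i ^ 2 * σ_j(μ without μ_i)`.

For the quotient `σ_k / σ_{k-1}` to increase under such an update it suffices, coordinate by
coordinate, that `σ_k(μ) σ_{k-2;i}(μ) ≤ σ_{k-1}(μ) σ_{k-1;i}(μ)`.  Expanding both sides in `μ_i`
turns this into the Newton inequality `σ_{k;i} σ_{k-2;i} ≤ σ_{k-1;i} ^ 2`, valid for all real vectors
because derivatives of real-rooted polynomials are real-rooted (`newton`).  The same inequality shows
that `σ_{j;i} > 0` on `Γ_m` for `j < m` (`elem_erase_pos`), so a rank-one update keeps a matrix in its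
Gårding cone.  Finally, a positive semidefinite matrix is a finite sum of matrices `v vᵀ`, which are
added one at a time.
-/

/-- The `j`-th elementary symmetric polynomial of `lam : Fin n → ℝ`:
`σ_j(λ) = ∑_{1 ≤ i₁ < ⋯ < i_j ≤ n} λ_{i₁} ⋯ λ_{i_j}`, with `σ_0(λ) = 1`. -/
noncomputable def esymmVec (n j : ℕ) (lam : Fin n → ℝ) : ℝ :=
  ∑ S ∈ Finset.univ.powersetCard j, ∏ i ∈ S, lam i

/-- Membership in the Gårding cone `Γ_m = {λ : σ_j(λ) > 0 for all 1 ≤ j ≤ m}`. -/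
def inGamma (n m : ℕ) (lam : Fin n → ℝ) : Prop :=
  ∀ j : ℕ, 1 ≤ j → j ≤ m → 0 < esymmVec n j lam

open Polynomial

/-! ### Newton's inequality for real-rooted polynomials -/

/-- By Rolle's theorem, counted with multiplicity, at most one root is lost on differentiating. -/
theorem splits_derivative_real {p : ℝ[X]} (hp : p.Splits) : (derivative p).Splits := by
  rw [splits_iff_card_roots] at hp ⊢
  have h1 := card_roots_le_derivative p
  have h2 := card_roots' (derivative p)
  have h3 := natDegree_derivative_le p
  by_cases h0 : p.natDegree = 0
  · rw [natDegree_eq_zero] at h0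
    obtain ⟨c, rfl⟩ := h0
    simp
  · omega

/-- The Laguerre inequality `p'(0) ^ 2 ≥ p(0) p''(0)` for a product of linear factors.  Multiplying
`q` by `X - r` turns `q'(0) ^ 2 - q(0) q''(0)` into `r ^ 2` times itself plus `q(0) ^ 2`. -/
theorem laguerre_multiset (s : Multiset ℝ) :
    2 * ((s.map fun r => X - C r).prod.coeff 0 * (s.map fun r => X - C r).prod.coeff 2) ≤
      (s.map fun r => X - C r).prod.coeff 1 ^ 2 := by
  induction s using Multiset.induction_on with
  | empty => simp [coeff_one]
  | cons r s ih =>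
    rw [Multiset.map_cons, Multiset.prod_cons]
    generalize (s.map fun r => X - C r).prod = q at ih ⊢
    have e0 : ((X - C r) * q).coeff 0 = -r * q.coeff 0 := by simp [sub_mul]
    have e1 : ((X - C r) * q).coeff 1 = q.coeff 0 - r * q.coeff 1 := by
      rw [sub_mul, coeff_sub, coeff_C_mul, show (1 : ℕ) = 0 + 1 from rfl, coeff_X_mul]
    have e2 : ((X - C r) * q).coeff 2 = q.coeff 1 - r * q.coeff 2 := by
      rw [sub_mul, coeff_sub, coeff_C_mul, show (2 : ℕ) = 1 + 1 from rfl, coeff_X_mul]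
    rw [e0, e1, e2]
    nlinarith [sq_nonneg (q.coeff 0), mul_nonneg (sq_nonneg r) (sub_nonneg.2 ih)]

theorem laguerre {p : ℝ[X]} (hp : p.Splits) :
    2 * (p.coeff 0 * p.coeff 2) ≤ p.coeff 1 ^ 2 := by
  rw [hp.eq_prod_roots]
  simp only [coeff_C_mul]
  nlinarith [mul_nonneg (sq_nonneg p.leadingCoeff) (sub_nonneg.2 (laguerre_multiset p.roots))]

/-- Newton's inequality for the coefficients of a real-rooted polynomial, obtained from the Laguerre
inequality by differentiating `m` times. -/
theorem newton_coeff (m : ℕ) {p : ℝ[X]} (hp : p.Splits) :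
    ((m : ℝ) + 2) * (p.coeff m * p.coeff (m + 2)) ≤ ((m : ℝ) + 1) * p.coeff (m + 1) ^ 2 := by
  induction m generalizing p with
  | zero => simpa using laguerre hp
  | succ m ih =>
    have h := ih (splits_derivative_real hp)
    simp only [coeff_derivative] at h
    push_cast at h ⊢
    have hpos : (0 : ℝ) < ((m : ℝ) + 1) * ((m : ℝ) + 2) := by positivity
    refine le_of_mul_le_mul_left ?_ hpos
    rw [show m + 1 + 2 = m + 2 + 1 from rfl]
    rw [show m + 1 + 1 = m + 2 from rfl] at h ⊢
    nlinarith [h]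

/-! ### Elementary symmetric polynomials over a finite index set -/

/-- The elementary symmetric polynomial `σ_j` in the variables `lam i`, `i ∈ s`.  Taking
`s = univ.erase i` gives the polynomial `σ_{j;i}` in which the `i`-th variable is omitted. -/
noncomputable def elem {ι : Type*} (s : Finset ι) (lam : ι → ℝ) (j : ℕ) : ℝ :=
  ∑ S ∈ s.powersetCard j, ∏ i ∈ S, lam i

theorem elem_zero {ι : Type*} (s : Finset ι) (lam : ι → ℝ) : elem s lam 0 = 1 := by
  simp [elem]

theorem elem_eq_coeff {ι : Type*} (s : Finset ι) (lam : ι → ℝ) {j : ℕ} (hj : j ≤ s.card) :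
    elem s lam j = (∏ i ∈ s, (X + C (lam i))).coeff (s.card - j) := by
  rw [Finset.prod_X_add_C_coeff s lam (Nat.sub_le _ _), Nat.sub_sub_self hj, elem]

theorem elem_succ {ι : Type*} [DecidableEq ι] {s : Finset ι} {i : ι} (hi : i ∈ s) (lam : ι → ℝ)
    (j : ℕ) :
    elem s lam (j + 1) = elem (s.erase i) lam (j + 1) + lam i * elem (s.erase i) lam j := by
  have hn : i ∉ s.erase i := Finset.notMem_erase i s
  conv_lhs => rw [← Finset.insert_erase hi]
  have hS : ∀ S ∈ (s.erase i).powersetCard j, i ∉ S := fun S hS h =>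
    hn ((Finset.mem_powersetCard.1 hS).1 h)
  unfold elem
  rw [Finset.powersetCard_succ_insert hn, Finset.sum_union, Finset.sum_image, Finset.mul_sum]
  · congr 1
    exact Finset.sum_congr rfl fun S h => Finset.prod_insert (hS S h)
  · intro S h T h' e
    rw [← Finset.erase_insert (hS S h), ← Finset.erase_insert (hS T h'), e]
  · rw [Finset.disjoint_left]
    intro S h h'
    obtain ⟨T, -, rfl⟩ := Finset.mem_image.1 h'
    exact hn ((Finset.mem_powersetCard.1 h).1 (Finset.mem_insert_self i T))

/-- Newton's inequality (without the sharp constant) for an arbitrary real vector. -/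
theorem newton {ι : Type*} (s : Finset ι) (lam : ι → ℝ) (j : ℕ) :
    elem s lam j * elem s lam (j + 2) ≤ elem s lam (j + 1) ^ 2 := by
  by_cases hj : j + 2 ≤ s.card
  · obtain ⟨m, hm⟩ := Nat.exists_eq_add_of_le hj
    have hs : (∏ i ∈ s, (X + C (lam i))).Splits := Splits.prod fun i _ => Splits.X_add_C _
    have h := newton_coeff m hs
    rw [elem_eq_coeff s lam (by omega : j ≤ s.card), elem_eq_coeff s lam hj,
      elem_eq_coeff s lam (by omega : j + 1 ≤ s.card), show s.card - j = m + 2 by omega,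
      show s.card - (j + 2) = m by omega, show s.card - (j + 1) = m + 1 by omega]
    generalize (∏ i ∈ s, (X + C (lam i))) = p at h
    rcases le_total (p.coeff m * p.coeff (m + 2)) 0 with h0 | h0
    · nlinarith [sq_nonneg (p.coeff (m + 1))]
    · have hm0 : (0 : ℝ) < (m : ℝ) + 1 := by positivity
      refine le_of_mul_le_mul_left ?_ hm0
      nlinarith
  · have : elem s lam (j + 2) = 0 := by
      rw [elem, Finset.powersetCard_eq_empty.2 (by omega), Finset.sum_empty]
    rw [this, mul_zero]
    positivity

/-- On the cone `Γ_m`, omitting one variable keeps `σ_j` positive for `j < m`. -/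
theorem elem_erase_pos {ι : Type*} [DecidableEq ι] {s : Finset ι} {i : ι} (hi : i ∈ s)
    (lam : ι → ℝ) {m : ℕ} (h : ∀ j, 1 ≤ j → j ≤ m → 0 < elem s lam j) (j : ℕ) (hj : j < m) :
    0 < elem (s.erase i) lam j := by
  induction j with
  | zero => simp [elem_zero]
  | succ j ih =>
    have ih := ih (by omega)
    have h1 := h (j + 1) (by omega) (by omega)
    have h2 := h (j + 2) (by omega) (by omega)
    rw [elem_succ hi] at h1 h2
    have hN := newton (s.erase i) lam j
    generalize elem (s.erase i) lam (j + 2) = c at *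
    generalize elem (s.erase i) lam (j + 1) = b at *
    generalize elem (s.erase i) lam j = a at *
    generalize lam i = l at *
    -- If `b ≤ 0`, then `l > 0`, `l * a > -b ≥ 0` and `c > -l * b ≥ 0`, so `a * c > b ^ 2`.
    by_contra! hb
    have hl : 0 < l := by
      by_contra! hl
      nlinarith
    have hc : 0 < c := by nlinarith
    have h3 : l * b ^ 2 ≤ -b * c := by nlinarith
    have h4 : -b * c < l * a * c := by nlinarith
    nlinarith

/-! ### Rank-one updates -/

open Matrix in
/-- The generating polynomial of a rank-one update of a diagonal matrix, by the matrix determinant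
lemma. -/
theorem det_diagonal_add_vecMulVec {n : ℕ} (d w : Fin n → ℝ) (hd : ∀ i, d i ≠ 0) :
    (diagonal d + vecMulVec w w).det =
      ∏ i, d i + ∑ i, w i ^ 2 * ∏ j ∈ Finset.univ.erase i, d j := by
  have hu : IsUnit (diagonal d).det := by
    rw [det_diagonal, isUnit_iff_ne_zero]
    exact Finset.prod_ne_zero_iff.2 fun i _ => hd i
  have hinv : (diagonal d)⁻¹ = diagonal fun i => (d i)⁻¹ := by
    apply inv_eq_right_inv
    rw [diagonal_mul_diagonal, ← diagonal_one]
    congr 1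
    ext i
    exact mul_inv_cancel₀ (hd i)
  rw [vecMulVec_eq Unit, det_add_replicateCol_mul_replicateRow hu, hinv, det_diagonal, det_unique,
    Matrix.add_apply, one_apply_eq, mul_add, mul_one]
  congr 1
  rw [mul_apply, Finset.mul_sum]
  refine Finset.sum_congr rfl fun i _ => ?_
  rw [mul_diagonal, ← Finset.mul_prod_erase _ _ (Finset.mem_univ i)]
  simp only [replicateRow_apply, replicateCol_apply]
  field_simp [hd i]

open Matrix in
theorem det_add_scalar_eigenvalues {n : ℕ} {M : Matrix (Fin n) (Fin n) ℝ} (hM : M.IsHermitian)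
    (t : ℝ) : (diagonal (fun _ => t) + M).det = ∏ i, (t + hM.eigenvalues i) := by
  have h := congrArg (fun p : ℝ[X] => p.eval (-t)) hM.charpoly_eq
  simp only [eval_charpoly, eval_prod, eval_sub, eval_X, eval_C] at h
  have e1 : diagonal (fun _ => t) + M = -(scalar (Fin n) (-t) - M) := by
    ext i j
    by_cases hij : i = j <;> simp [hij, add_comm]
  rw [e1, det_neg, h]
  have e2 : ∏ i, (t + hM.eigenvalues i) = ∏ i : Fin n, (-1) * (-t - hM.eigenvalues i) :=
    Finset.prod_congr rfl fun i _ => by ring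
  rw [e2, Finset.prod_mul_distrib]
  simp

open Matrix in
/-- The product polynomial `∏ (X + λ_i)` of a rank-one update; the weights `w` are the coordinates
of `v` in an eigenbasis. -/
theorem prod_rank_one {n : ℕ} {M : Matrix (Fin n) (Fin n) ℝ} (hM : M.IsHermitian) (v : Fin n → ℝ)
    (hM' : (M + vecMulVec v v).IsHermitian) :
    ∃ w : Fin n → ℝ, ∏ i, (X + C (hM'.eigenvalues i)) = ∏ i, (X + C (hM.eigenvalues i)) +
      ∑ i, C (w i ^ 2) * ∏ j ∈ Finset.univ.erase i, (X + C (hM.eigenvalues j)) := by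
  let U : Matrix (Fin n) (Fin n) ℝ := hM.eigenvectorUnitary
  have hU : U * star U = 1 := Unitary.coe_mul_star_self hM.eigenvectorUnitary
  have hU' : star U * U = 1 := Unitary.coe_star_mul_self hM.eigenvectorUnitary
  have hspec : M = U * diagonal hM.eigenvalues * star U := by
    have := hM.spectral_theorem
    rw [Unitary.conjStarAlgAut_apply] at this
    exact this
  let w : Fin n → ℝ := star U *ᵥ v
  have hv : v = U *ᵥ w := by
    simp only [w]
    rw [mulVec_mulVec, hU, one_mulVec]
  refine ⟨w, ?_⟩
  apply eq_of_infinite_eval_eq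
  -- The determinant lemma needs `diagonal (t + λ)` invertible, which excludes finitely many `t`.
  have hfin : (Set.range fun i => -hM.eigenvalues i).Finite := Set.finite_range _
  refine hfin.infinite_compl.mono ?_
  intro t ht
  have hd : ∀ i, t + hM.eigenvalues i ≠ 0 := fun i hi => ht ⟨i, by
    simp only
    linarith⟩
  simp only [Set.mem_ofPred_eq, eval_prod, eval_add, eval_X, eval_C, eval_finsetSum, eval_mul]
  rw [← det_add_scalar_eigenvalues hM' t, ← det_diagonal_add_vecMulVec _ w hd]
  have hvv : vecMulVec v v = U * vecMulVec w w * star U := by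
    rw [mul_vecMulVec, vecMulVec_mul, ← hv]
    congr 1
    rw [hv, star_eq_conjTranspose, conjTranspose_eq_transpose_of_trivial, vecMul_transpose]
  have hsc : diagonal (fun _ : Fin n => t) = U * diagonal (fun _ => t) * star U := by
    have : diagonal (fun _ : Fin n => t) = t • (1 : Matrix (Fin n) (Fin n) ℝ) := by
      rw [smul_one_eq_diagonal]
    rw [this, Matrix.mul_smul, Matrix.mul_one, Matrix.smul_mul, hU]
  have key : diagonal (fun _ => t) + (M + vecMulVec v v) =
      U * (diagonal (fun i => t + hM.eigenvalues i) + vecMulVec w w) * star U := by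
    have e : diagonal (fun i => t + hM.eigenvalues i) =
        diagonal (fun _ => t) + diagonal hM.eigenvalues := (diagonal_add _ _).symm
    rw [e, Matrix.mul_add, Matrix.mul_add, Matrix.add_mul, Matrix.add_mul, ← hsc, ← hspec, ← hvv,
      add_assoc]
  rw [key, det_mul_comm, ← Matrix.mul_assoc, hU', Matrix.one_mul]

open Matrix in
/-- The effect of a rank-one update on all elementary symmetric polynomials of the eigenvalues, with
weights independent of the degree. -/
theorem esymm_rank_one {n : ℕ} {M : Matrix (Fin n) (Fin n) ℝ} (hM : M.IsHermitian) (v : Fin n → ℝ)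
    (hM' : (M + vecMulVec v v).IsHermitian) :
    ∃ w : Fin n → ℝ, ∀ j, j + 1 ≤ n →
      elem Finset.univ hM'.eigenvalues (j + 1) = elem Finset.univ hM.eigenvalues (j + 1) +
        ∑ i, w i ^ 2 * elem (Finset.univ.erase i) hM.eigenvalues j := by
  obtain ⟨w, hw⟩ := prod_rank_one hM v hM'
  refine ⟨w, fun j hj => ?_⟩
  have hc : (Finset.univ : Finset (Fin n)).card = n := by simp
  rw [elem_eq_coeff _ _ (by omega), elem_eq_coeff _ _ (by omega), hw, coeff_add,
    finsetSum_coeff]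
  congr 1
  refine Finset.sum_congr rfl fun i _ => ?_
  have hce : (Finset.univ.erase i).card = n - 1 := by
    rw [Finset.card_erase_of_mem (Finset.mem_univ i), hc]
  rw [coeff_C_mul, elem_eq_coeff _ _ (by omega), hce, hc]
  congr 2
  omega

/-! ### Monotonicity of the quotient -/

/-- The coordinatewise form of monotonicity: after expanding in `lam i` this is `newton` for the
remaining variables. -/
theorem quotient_coord {ι : Type*} [DecidableEq ι] {s : Finset ι} {i : ι} (hi : i ∈ s)
    (lam : ι → ℝ) (j : ℕ) :
    elem s lam (j + 2) * elem (s.erase i) lam j ≤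
      elem s lam (j + 1) * elem (s.erase i) lam (j + 1) := by
  rw [elem_succ hi, elem_succ hi lam j]
  nlinarith [newton (s.erase i) lam j]

open Matrix in
/-- A rank-one update preserves the Gårding cone and increases the quotient: both follow term by
term from the expansion in `esymm_rank_one`. -/
theorem rank_one_step {n k : ℕ} (hkn : k + 2 ≤ n) {M : Matrix (Fin n) (Fin n) ℝ}
    (hM : M.IsHermitian) (v : Fin n → ℝ) (hM' : (M + vecMulVec v v).IsHermitian)
    (hG : inGamma n (k + 1) hM.eigenvalues) :
    inGamma n (k + 1) hM'.eigenvalues ∧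
      esymmVec n (k + 2) hM.eigenvalues / esymmVec n (k + 1) hM.eigenvalues ≤
        esymmVec n (k + 2) hM'.eigenvalues / esymmVec n (k + 1) hM'.eigenvalues := by
  change (∀ j, 1 ≤ j → j ≤ k + 1 → 0 < elem Finset.univ hM.eigenvalues j) at hG
  change (∀ j, 1 ≤ j → j ≤ k + 1 → 0 < elem Finset.univ hM'.eigenvalues j) ∧
      elem Finset.univ hM.eigenvalues (k + 2) / elem Finset.univ hM.eigenvalues (k + 1) ≤
        elem Finset.univ hM'.eigenvalues (k + 2) / elem Finset.univ hM'.eigenvalues (k + 1)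
  obtain ⟨w, hw⟩ := esymm_rank_one hM v hM'
  have hpos : ∀ j, 1 ≤ j → j ≤ k + 1 → 0 < elem Finset.univ hM'.eigenvalues j := by
    intro j hj1 hjk
    obtain ⟨j, rfl⟩ := Nat.exists_eq_add_of_le' hj1
    rw [hw j (by omega)]
    refine add_pos_of_pos_of_nonneg (hG _ hj1 hjk) (Finset.sum_nonneg fun i _ => ?_)
    exact mul_nonneg (sq_nonneg _)
      (elem_erase_pos (Finset.mem_univ i) _ hG j (by omega)).le
  refine ⟨hpos, ?_⟩
  rw [div_le_div_iff₀ (hG _ (by omega) le_rfl) (hpos _ (by omega) le_rfl), hw k (by omega),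
    hw (k + 1) (by omega), mul_add, add_mul, mul_comm (elem _ _ (k + 2)) (elem _ _ (k + 1)),
    mul_comm (elem _ _ (k + 1 + 1))]
  refine add_le_add le_rfl ?_
  rw [Finset.sum_mul, Finset.sum_mul]
  refine Finset.sum_le_sum fun i _ => ?_
  have := mul_le_mul_of_nonneg_left
    (quotient_coord (Finset.mem_univ i) hM.eigenvalues k) (sq_nonneg (w i))
  linarith

open Matrix in
theorem sum_rank_one_step {n k : ℕ} (hkn : k + 2 ≤ n) {M : Matrix (Fin n) (Fin n) ℝ}
    (hM : M.IsHermitian) (hG : inGamma n (k + 1) hM.eigenvalues) (m : ℕ)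
    (v : Fin m → Fin n → ℝ) :
    ∀ N : Matrix (Fin n) (Fin n) ℝ, N = M + ∑ i, vecMulVec (v i) (v i) → ∀ hN : N.IsHermitian,
      inGamma n (k + 1) hN.eigenvalues ∧
        esymmVec n (k + 2) hM.eigenvalues / esymmVec n (k + 1) hM.eigenvalues ≤
          esymmVec n (k + 2) hN.eigenvalues / esymmVec n (k + 1) hN.eigenvalues := by
  induction m with
  | zero =>
    intro N hNM hN
    obtain rfl : N = M := by simpa using hNM
    exact ⟨hG, le_rfl⟩
  | succ m ih =>
    intro N hNM hN
    rw [Fin.sum_univ_castSucc, ← add_assoc] at hNM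
    have hvv : ∀ u : Fin n → ℝ, (vecMulVec u u).IsHermitian := fun u => by
      ext i j
      simp [vecMulVec_apply, mul_comm]
    have hP : (M + ∑ i : Fin m, vecMulVec (v i.castSucc) (v i.castSucc)).IsHermitian := by
      refine hM.add ?_
      unfold IsHermitian
      rw [conjTranspose_sum]
      exact Finset.sum_congr rfl fun i _ => hvv _
    obtain ⟨h1, h2⟩ := ih (fun i => v i.castSucc) _ rfl hP
    subst hNM
    obtain ⟨h3, h4⟩ := rank_one_step hkn hP (v (Fin.last m)) hN h1
    exact ⟨h3, h2.trans h4⟩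

/-- Lemma (A+B), part (1), first inequality: if `A` is positive semidefinite,
`B ∈ Γ_{k-1}` and `A + B ∈ Γ_{k-1}`, then
`σ_k(A+B)/σ_{k-1}(A+B) ≥ σ_k(B)/σ_{k-1}(B)`. -/
theorem stmt_0 (n k : ℕ) (hn : 2 ≤ n) (hk2 : 2 ≤ k) (hkn : k ≤ n)
    (A B : Matrix (Fin n) (Fin n) ℝ) (hA : A.IsHermitian) (hB : B.IsHermitian)
    (hApsd : A.PosSemidef)
    (hBG : inGamma n (k - 1) hB.eigenvalues)
    (hABG : inGamma n (k - 1) (hA.add hB).eigenvalues) :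
    esymmVec n k (hA.add hB).eigenvalues / esymmVec n (k - 1) (hA.add hB).eigenvalues ≥
      esymmVec n k hB.eigenvalues / esymmVec n (k - 1) hB.eigenvalues := by
  obtain ⟨k, rfl⟩ := Nat.exists_eq_add_of_le' hk2
  obtain ⟨m, v, hv⟩ := Matrix.posSemidef_iff_eq_sum_vecMulVec.1 hApsd
  have hAB : A + B = B + ∑ i, Matrix.vecMulVec (v i) (v i) := by
    rw [add_comm, hv]
    simp
  exact (sum_rank_one_step hkn hB hBG m v _ hAB (hA.add hB)).2
end

section
/- Let n ≥ 3 and 3 ≤ k ≤ n, and let β_0, …, β_{k-2} be nonnegative real numbers. Define F : Γ_{k-1} → ℝ by F(λ) = σ_k(λ)/σ_{k-1}(λ) − Σ_{l=0}^{k-2} β_l σ_l(λ)/σ_{k-1}(λ). Then for every λ ∈ Γ_{k-1}, Σ_{i=1}^{n} ∂F/∂λ_i (λ) ≥ (n−k+1)/k. -/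
open Polynomial in
/-- Laguerre's inequality for a monic split polynomial, given by the multiset of its roots. -/
lemma laguerre_prod (s : Multiset ℝ) (x : ℝ) :
    (s.card : ℝ) * ((s.map fun a => X - C a).prod.eval x *
        (derivative (derivative (s.map fun a => X - C a).prod)).eval x) ≤
      ((s.card : ℝ) - 1) * (derivative (s.map fun a => X - C a).prod).eval x ^ 2 := by
  induction s using Multiset.induction_on with
  | empty => simp
  | cons a s ih =>
    simp only [Multiset.map_cons, Multiset.prod_cons, Multiset.card_cons, derivative_mul,
      derivative_add, derivative_sub, derivative_X, derivative_C, eval_add, eval_mul, eval_sub,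
      eval_X, eval_C, sub_zero, one_mul]
    push_cast
    rcases Multiset.empty_or_exists_mem s with rfl | ⟨b, hb⟩
    · simp
    · have hpos : (0 : ℝ) < s.card := by exact_mod_cast Multiset.card_pos_iff_exists_mem.2 ⟨b, hb⟩
      generalize (s.map fun a => X - C a).prod = R at ih ⊢
      generalize (s.card : ℝ) = m at ih hpos ⊢
      generalize eval x R = r at ih ⊢
      generalize eval x (derivative R) = u at ih ⊢
      generalize eval x (derivative (derivative R)) = v at ih ⊢
      -- After multiplication by `m`, the difference of the two sides is at least this square.
      have hsq := sq_nonneg (m * r - (x - a) * u)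
      have hih := mul_le_mul_of_nonneg_left ih
        (mul_nonneg (sq_nonneg (x - a)) (by linarith : 0 ≤ m + 1))
      refine le_of_mul_le_mul_left ?_ hpos
      ring_nf at hsq hih ⊢
      linarith

open Polynomial in
lemma laguerre_of_splits {Q : ℝ[X]} (hQ : Q.Splits) (x : ℝ) :
    (Q.natDegree : ℝ) * (Q.eval x * (derivative (derivative Q)).eval x) ≤
      ((Q.natDegree : ℝ) - 1) * (derivative Q).eval x ^ 2 := by
  have h := mul_le_mul_of_nonneg_left (laguerre_prod Q.roots x) (sq_nonneg Q.leadingCoeff)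
  rw [← hQ.natDegree_eq_card_roots] at h
  have hp := hQ.eq_prod_roots
  generalize (Q.roots.map fun a => X - C a).prod = R at h hp
  generalize Q.leadingCoeff = c at h hp
  generalize Q.natDegree = d at h ⊢
  subst hp
  simp only [derivative_C_mul, eval_mul, eval_C]
  linarith

open Polynomial in
lemma splits_derivative_real_s11 {Q : ℝ[X]} (hQ : Q.Splits) : (derivative Q).Splits := by
  rw [splits_iff_card_roots] at hQ ⊢
  have h1 := card_roots_le_derivative Q
  have h2 := card_roots' (derivative Q)
  have h3 := natDegree_derivative_le Q
  rcases Nat.eq_zero_or_pos Q.natDegree with h0 | hpos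
  · rw [natDegree_eq_zero] at h0
    obtain ⟨c, rfl⟩ := h0
    simp
  · omega

open Polynomial in
/-- Newton's inequality for the coefficients of a split real polynomial. -/
lemma newton_coeff_s11 {P : ℝ[X]} (hP : P.Splits) (m : ℕ) (hm : m ≤ P.natDegree) :
    ((P.natDegree : ℝ) - m) * (m + 2) * (P.coeff m * P.coeff (m + 2)) ≤
      ((P.natDegree : ℝ) - m - 1) * (m + 1) * P.coeff (m + 1) ^ 2 := by
  have hs : ∀ i : ℕ, (derivative^[i] P).Splits := by
    intro i
    induction i with
    | zero => simpa using hP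
    | succ i ih => rw [Function.iterate_succ_apply']; exact splits_derivative_real_s11 ih
  have hd : ∀ i : ℕ, (derivative^[i] P).natDegree = P.natDegree - i := by
    intro i
    induction i with
    | zero => simp
    | succ i ih => rw [Function.iterate_succ_apply', natDegree_derivative, ih]; omega
  have hc : ∀ i : ℕ, (derivative^[i] P).eval 0 = (i.factorial : ℝ) * P.coeff i := by
    intro i
    rw [← coeff_zero_eq_eval_zero, coeff_iterate_derivative]
    simp [Nat.descFactorial_self]
  have h := laguerre_of_splits (hs m) 0
  rw [← Function.iterate_succ_apply' derivative, ← Function.iterate_succ_apply' derivative,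
    hd, hc, hc, hc, Nat.cast_sub hm] at h
  simp only [Nat.factorial_succ, Nat.succ_eq_add_one] at h
  push_cast at h
  have hf : (0 : ℝ) < (m.factorial : ℝ) ^ 2 * (m + 1) := by positivity
  refine le_of_mul_le_mul_left ?_ hf
  ring_nf at h ⊢
  linarith

open Polynomial in
/-- The polynomial `∏ (X + λ_i)`, whose coefficients are the `σ_j(λ)`. -/
noncomputable def vietaPoly {n : ℕ} (lam : Fin n → ℝ) : ℝ[X] := ∏ i, (X + C (lam i))

open Polynomial in
lemma natDegree_vietaPoly {n : ℕ} (lam : Fin n → ℝ) : (vietaPoly lam).natDegree = n := by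
  rw [vietaPoly, natDegree_prod_of_monic _ _ fun i _ => monic_X_add_C _]
  simp

lemma coeff_vietaPoly {n : ℕ} (lam : Fin n → ℝ) {i j : ℕ} (h : i + j = n) :
    (vietaPoly lam).coeff i = esymmVec n j lam := by
  rw [vietaPoly, Finset.prod_X_add_C_coeff _ _ (by simp; omega), esymmVec]
  congr 2
  simp; omega

lemma splits_vietaPoly {n : ℕ} (lam : Fin n → ℝ) : (vietaPoly lam).Splits :=
  Polynomial.Splits.prod fun _ _ => Polynomial.Splits.X_add_C _

/-- Newton's inequality, in the form `(j + 2) (n - j) σ_{j+2} σ_j ≤ (j + 1) (n - j - 1) σ_{j+1}²`. -/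
lemma esymmVec_newton {n j : ℕ} (hj : j + 2 ≤ n) (lam : Fin n → ℝ) :
    ((j : ℝ) + 2) * (n - j) * (esymmVec n (j + 2) lam * esymmVec n j lam) ≤
      ((j : ℝ) + 1) * (n - j - 1) * esymmVec n (j + 1) lam ^ 2 := by
  obtain ⟨m, rfl⟩ := Nat.exists_eq_add_of_le hj
  have h := newton_coeff_s11 (splits_vietaPoly lam) m (by rw [natDegree_vietaPoly]; omega)
  rw [natDegree_vietaPoly, coeff_vietaPoly lam (i := m) (j := j + 2) (by omega),
    coeff_vietaPoly lam (i := m + 1) (j := j + 1) (by omega),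
    coeff_vietaPoly lam (i := m + 2) (j := j) (by omega)] at h
  push_cast at h ⊢
  ring_nf at h ⊢
  linarith

lemma esymmVec_zero (n : ℕ) (lam : Fin n → ℝ) : esymmVec n 0 lam = 1 := by
  simp [esymmVec]

/-- The ratios `(n - a) σ_a / σ_{a+1}` increase with `a` where all `σ_j` are positive. -/
lemma esymmVec_cross {n q : ℕ} (hq : q ≤ n) {lam : Fin n → ℝ} (hG : inGamma n q lam)
    {a b : ℕ} (hab : a ≤ b) (hb : b + 1 ≤ q) :
    ((n : ℝ) - a) * (esymmVec n a lam * esymmVec n (b + 1) lam) ≤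
      ((n : ℝ) - b) * (esymmVec n b lam * esymmVec n (a + 1) lam) := by
  have pos : ∀ j ≤ q, 0 < esymmVec n j lam := by
    intro j hj
    rcases Nat.eq_zero_or_pos j with rfl | h
    · simp [esymmVec_zero]
    · exact hG j h hj
  induction b, hab using Nat.le_induction with
  | base => exact le_rfl
  | succ b hab ih =>
    have ih := ih (by omega)
    have hN := esymmVec_newton (j := b) (by omega) lam
    have p0 := pos b (by omega)
    have p1 := pos (b + 1) (by omega)
    have p2 := pos (b + 2) (by omega)
    have pa := pos (a + 1) (by omega)
    have hbn : (0 : ℝ) ≤ n - b := by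
      have : (b : ℝ) ≤ n := by exact_mod_cast (by omega : b ≤ n)
      linarith
    -- Newton's inequality weakened by the factor `(b + 2) / (b + 1) ≥ 1`.
    have hNb : ((n : ℝ) - b) * (esymmVec n (b + 2) lam * esymmVec n b lam) ≤
        (n - b - 1) * esymmVec n (b + 1) lam ^ 2 := by
      have hb1 : (0 : ℝ) < (b : ℝ) + 1 := by positivity
      have : 0 ≤ ((n : ℝ) - b) * (esymmVec n (b + 2) lam * esymmVec n b lam) := by positivity
      refine le_of_mul_le_mul_left ?_ hb1
      linarith
    refine le_of_mul_le_mul_right ?_ p1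
    have e1 := mul_le_mul_of_nonneg_right ih p2.le
    have e2 := mul_le_mul_of_nonneg_right hNb pa.le
    push_cast
    rw [show b + 1 + 1 = b + 2 from rfl]
    linarith

open Polynomial in
/-- `σ_j(λ + t e)` is the value at `t` of the `(n - j)`-th Hasse derivative of `∏ (X + λ_i)`. -/
lemma esymmVec_shift {n i j : ℕ} (h : i + j = n) (lam : Fin n → ℝ) (t : ℝ) :
    esymmVec n j (lam + t • (1 : Fin n → ℝ)) = (hasseDeriv i (vietaPoly lam)).eval t := by
  rw [← taylor_coeff, ← coeff_vietaPoly _ h]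
  congr 1
  simp only [vietaPoly, taylor_apply, prod_comp]
  refine Finset.prod_congr rfl fun i _ => ?_
  simp only [add_comp, X_comp, C_comp, Pi.add_apply, Pi.smul_apply, Pi.one_apply, smul_eq_mul,
    mul_one, C_add]
  ring

open Polynomial in
lemma hasDerivAt_esymmVec {n i j : ℕ} (h : i + j = n) (lam : Fin n → ℝ) :
    HasDerivAt (fun t : ℝ => esymmVec n j (lam + t • (1 : Fin n → ℝ)))
      (((i : ℝ) + 1) * (vietaPoly lam).coeff (i + 1)) 0 := by
  have := (hasseDeriv i (vietaPoly lam)).hasDerivAt 0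
  simp_rw [esymmVec_shift h lam]
  refine this.congr_deriv ?_
  rw [← coeff_zero_eq_eval_zero, coeff_derivative, hasseDeriv_coeff]
  simp [add_comm 1 i]

lemma differentiable_esymmVec (n j : ℕ) : Differentiable ℝ (esymmVec n j) := by
  unfold esymmVec
  fun_prop

/-- Lower bound on the trace of the linearized operator: for
`F(λ) = σ_k/σ_{k-1} - ∑_{l=0}^{k-2} β_l σ_l/σ_{k-1}` with `β_l ≥ 0` and
`λ ∈ Γ_{k-1}`, we have `∑_i ∂F/∂λ_i(λ) ≥ (n-k+1)/k`. -/
theorem stmt_11 (n k : ℕ) (hn : 3 ≤ n) (hk3 : 3 ≤ k) (hkn : k ≤ n)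
    (β : ℕ → ℝ) (hβ : ∀ l ≤ k - 2, 0 ≤ β l)
    (lam : Fin n → ℝ) (hG : inGamma n (k - 1) lam) :
    ∑ i : Fin n,
        fderiv ℝ
          (fun x : Fin n → ℝ =>
            esymmVec n k x / esymmVec n (k - 1) x -
              ∑ l ∈ Finset.range (k - 1), β l * (esymmVec n l x / esymmVec n (k - 1) x))
          lam (Pi.single i 1) ≥
      ((n : ℝ) - k + 1) / k := by
  obtain ⟨q, rfl⟩ : ∃ q, k = q + 2 := ⟨k - 2, by omega⟩
  obtain ⟨m, rfl⟩ : ∃ m, n = q + 2 + m := ⟨n - (q + 2), by omega⟩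
  simp only [show q + 2 - 1 = q + 1 from rfl, show q + 2 - 2 = q from rfl] at *
  have p1 : 0 < esymmVec (q + 2 + m) (q + 1) lam := hG (q + 1) (by omega) le_rfl
  have hdiff : DifferentiableAt ℝ (fun x : Fin (q + 2 + m) → ℝ =>
      esymmVec (q + 2 + m) (q + 2) x / esymmVec (q + 2 + m) (q + 1) x -
        ∑ l ∈ Finset.range (q + 1), β l *
          (esymmVec (q + 2 + m) l x / esymmVec (q + 2 + m) (q + 1) x)) lam := by
    have hd : ∀ j, DifferentiableAt ℝ (fun x => esymmVec (q + 2 + m) j x) lam :=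
      fun j => (differentiable_esymmVec _ j).differentiableAt
    simp only [div_eq_mul_inv]
    exact ((hd _).fun_mul ((hd _).fun_inv p1.ne')).fun_sub (DifferentiableAt.fun_sum fun l _ =>
      ((hd _).fun_mul ((hd _).fun_inv p1.ne')).const_mul _)
  rw [← map_sum, Finset.univ_sum_single (fun _ => (1 : ℝ)),
    ← hdiff.lineDeriv_eq_fderiv]
  have e1 := hasDerivAt_esymmVec (i := m + 1) (j := q + 1) (by omega) lam
  have e2 := hasDerivAt_esymmVec (i := m) (j := q + 2) (by omega) lam
  rw [coeff_vietaPoly lam (j := q) (by omega)] at e1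
  rw [coeff_vietaPoly lam (j := q + 1) (by omega)] at e2
  have hne : esymmVec (q + 2 + m) (q + 1) (lam + (0 : ℝ) • (1 : Fin (q + 2 + m) → ℝ)) ≠ 0 := by
    simpa using p1.ne'
  have key := (e2.fun_div e1 hne).fun_sub (HasDerivAt.fun_sum (u := Finset.range (q + 1))
    fun l hl => ((hasDerivAt_esymmVec (i := q + 2 + m - l) (j := l)
      (by have := Finset.mem_range.1 hl; omega) lam).fun_div e1 hne).const_mul (β l))
  have key' := key.deriv
  change deriv _ 0 ≥ _
  refine le_of_le_of_eq ?_ key'.symm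
  simp only [zero_smul, add_zero]
  have hsum : ∑ l ∈ Finset.range (q + 1), β l *
      (((((q + 2 + m - l : ℕ) : ℝ) + 1) * (vietaPoly lam).coeff (q + 2 + m - l + 1) *
        esymmVec (q + 2 + m) (q + 1) lam -
        esymmVec (q + 2 + m) l lam * ((((m + 1 : ℕ) : ℝ) + 1) * esymmVec (q + 2 + m) q lam)) /
          esymmVec (q + 2 + m) (q + 1) lam ^ 2) ≤ 0 := by
    refine Finset.sum_nonpos fun l hl => ?_
    have hl' : l ≤ q := Nat.lt_succ_iff.1 (Finset.mem_range.1 hl)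
    refine mul_nonpos_of_nonneg_of_nonpos (hβ l hl')
      (div_nonpos_of_nonpos_of_nonneg ?_ (sq_nonneg _))
    rcases Nat.eq_zero_or_pos l with rfl | hpos
    -- `σ_0` is constant: the coefficient of `X ^ (n + 1)` in `∏ (X + λ_i)` vanishes.
    · rw [Polynomial.coeff_eq_zero_of_natDegree_lt (by rw [natDegree_vietaPoly]; omega),
        esymmVec_zero]
      have := hG q (by omega) (by omega)
      have : 0 ≤ (((m + 1 : ℕ) : ℝ) + 1) * esymmVec (q + 2 + m) q lam := by positivity
      linarith
    · obtain ⟨a, rfl⟩ : ∃ a, l = a + 1 := ⟨l - 1, by omega⟩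
      have h := esymmVec_cross (q := q + 1) (by omega) hG (a := a) (b := q) (by omega) le_rfl
      rw [coeff_vietaPoly lam (j := a) (by omega), Nat.cast_sub (by omega)]
      push_cast at h ⊢
      ring_nf at h ⊢
      linarith
  have hN := esymmVec_newton (j := q) (by omega) lam
  generalize esymmVec (q + 2 + m) (q + 1) lam = s at *
  have hmain : (((q + 2 + m : ℕ) : ℝ) - ((q + 2 : ℕ) : ℝ) + 1) / ((q + 2 : ℕ) : ℝ) ≤
      (((m : ℝ) + 1) * s * s - esymmVec (q + 2 + m) (q + 2) lam *
        ((((m + 1 : ℕ) : ℝ) + 1) * esymmVec (q + 2 + m) q lam)) / s ^ 2 := by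
    rw [div_le_div_iff₀ (by positivity) (by positivity)]
    push_cast at hN ⊢
    ring_nf at hN ⊢
    linarith
  linarith
end
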